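/- Let Q_n denote the zonotope [−1,1]^{n−1} + [0, (1,…,1)] ⊂ ℝ^{n−1} (Minkowski sum of the (n−1)-cube with the segment from 0 to the all-ones vector). Then the f-vector of Q_n satisfies the recursion f_{Q_n,0} = f_{□_{n−1},0} + f_{Q_{n−1},0} and f_{Q_n,i} = f_{□_{n−1},i} + f_{Q_{n−1},i} + f_{Q_{n−1},i−1} for i ∈ {1,…,n−2}, where □_{n−1} = [−1,1]^{n−1} and f_{P,i} is the number of i-faces of P. -/

import Mathlib

open Set Module

/-- A (possibly empty or improper) face of `P`: the set of maximizers of a linear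
functional over `P` (at level `α`, an upper bound of the functional on `P`). -/
def IsFace {E : Type*} [AddCommGroup E] [Module ℝ E] (P F : Set E) : Prop :=
  ∃ (c : E →ₗ[ℝ] ℝ) (α : ℝ), (∀ x ∈ P, c x ≤ α) ∧ F = {x ∈ P | c x = α}

/-- The number of nonempty proper faces of `P` of dimension `i`. -/
noncomputable def nF {E : Type*} [AddCommGroup E] [Module ℝ E] (P : Set E) (i : ℕ) : ℕ :=
  Set.ncard {F : Set E | IsFace P F ∧ F ≠ P ∧ F.Nonempty ∧
    Module.finrank ℝ (vectorSpan ℝ F) = i}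

/-- The d-cube `[-1,1]^d`. -/
def cube (d : ℕ) : Set (Fin d → ℝ) := {x | ∀ i, |x i| ≤ 1}

/-- The zonotope `[-1,1]^d + [0, (1,…,1)]`. -/
def zon (d : ℕ) : Set (Fin d → ℝ) :=
  {z | ∃ x ∈ cube d, ∃ t : ℝ, 0 ≤ t ∧ t ≤ 1 ∧ z = x + t • (fun _ => (1 : ℝ) : Fin d → ℝ)}

/-- The zonotope with center `p` and generators `v`. -/
def zonotope {ι E : Type*} [Fintype ι] [AddCommGroup E] [Module ℝ E] (p : E) (v : ι → E) :
    Set E :=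
  {y | ∃ x : ι → ℝ, (∀ j, |x j| ≤ 1) ∧ y = p + ∑ j, x j • v j}

/-- The part of `zonotope p v` whose coefficients are prescribed by the nonzero entries of `s`. -/
def signFace {ι E : Type*} [Fintype ι] [AddCommGroup E] [Module ℝ E] (p : E) (v : ι → E)
    (s : ι → SignType) : Set E :=
  {y | ∃ x : ι → ℝ, (∀ j, |x j| ≤ 1) ∧ (∀ j, s j ≠ 0 → x j = (s j : ℝ)) ∧
    y = p + ∑ j, x j • v j}

theorem abs_coe_signType_le_one (a : SignType) : |(a : ℝ)| ≤ 1 := by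
  cases a <;> simp

theorem mul_le_abs_of_abs_le_one {x a : ℝ} (hx : |x| ≤ 1) : x * a ≤ |a| :=
  calc x * a ≤ |x * a| := le_abs_self _
    _ = |x| * |a| := abs_mul _ _
    _ ≤ |a| := mul_le_of_le_one_left (abs_nonneg _) hx

theorem mul_eq_abs_iff (x a : ℝ) :
    x * a = |a| ↔ (SignType.sign a ≠ 0 → x = (SignType.sign a : ℝ)) := by
  rcases lt_trichotomy a 0 with h | h | h
  · rw [abs_of_neg h, sign_neg h]
    constructor
    · intro e _
      have : (x + 1) * a = 0 := by linarith
      rcases mul_eq_zero.1 this with h' | h'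
      · simp; linarith
      · exact absurd h' h.ne
    · intro e
      have : x = -1 := by simpa using e
      rw [this]; ring
  · simp [h]
  · rw [abs_of_pos h, sign_pos h]
    constructor
    · intro e _
      simpa using mul_right_cancel₀ h.ne' (e.trans (one_mul a).symm)
    · intro e
      have : x = 1 := by simpa using e
      rw [this]; ring

section Zonotope

variable {ι E : Type*} [Fintype ι] [AddCommGroup E] [Module ℝ E]

theorem sum_eq_sum_abs_iff {x a : ι → ℝ} (hx : ∀ j, |x j| ≤ 1) :
    ∑ j, x j * a j = ∑ j, |a j| ↔
      ∀ j, SignType.sign (a j) ≠ 0 → x j = (SignType.sign (a j) : ℝ) := by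
  rw [Finset.sum_eq_sum_iff_of_le fun j _ => mul_le_abs_of_abs_le_one (hx j)]
  simp [mul_eq_abs_iff]

theorem signFace_center_mem (p : E) (v : ι → E) (s : ι → SignType) :
    p + ∑ j, (s j : ℝ) • v j ∈ signFace p v s :=
  ⟨fun j => (s j : ℝ), fun _ => abs_coe_signType_le_one _, fun _ _ => rfl, rfl⟩

theorem signFace_zero (p : E) (v : ι → E) : signFace p v 0 = zonotope p v := by
  simp [signFace, zonotope]

theorem signFace_eq_maximizers (p : E) (v : ι → E) (c : E →ₗ[ℝ] ℝ) :
    signFace p v (fun j => SignType.sign (c (v j))) =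
      {y ∈ zonotope p v | c y = c p + ∑ j, |c (v j)|} := by
  ext y
  constructor
  · rintro ⟨x, hx, hs, rfl⟩
    refine ⟨⟨x, hx, rfl⟩, ?_⟩
    have := (sum_eq_sum_abs_iff (a := fun j => c (v j)) hx).2 hs
    simpa using this
  · rintro ⟨⟨x, hx, rfl⟩, hc⟩
    refine ⟨x, hx, (sum_eq_sum_abs_iff hx).1 ?_, rfl⟩
    simpa using hc

theorem map_le_of_mem_zonotope {p : E} {v : ι → E} (c : E →ₗ[ℝ] ℝ) {y : E}
    (hy : y ∈ zonotope p v) : c y ≤ c p + ∑ j, |c (v j)| := by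
  obtain ⟨x, hx, rfl⟩ := hy
  simpa using Finset.sum_le_sum fun j (_ : j ∈ Finset.univ) =>
    mul_le_abs_of_abs_le_one (a := c (v j)) (hx j)

theorem isFace_zonotope_iff (p : E) (v : ι → E) (F : Set E) :
    IsFace (zonotope p v) F ∧ F.Nonempty ↔
      ∃ c : E →ₗ[ℝ] ℝ, F = signFace p v (fun j => SignType.sign (c (v j))) := by
  constructor
  · rintro ⟨⟨c, α, hα, rfl⟩, y, hy, hyα⟩
    refine ⟨c, ?_⟩
    have hmem := signFace_center_mem p v (fun j => SignType.sign (c (v j)))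
    rw [signFace_eq_maximizers] at hmem ⊢
    have h1 := hα _ hmem.1
    rw [hmem.2] at h1
    have h2 := map_le_of_mem_zonotope c hy
    rw [show α = c p + ∑ j, |c (v j)| by linarith]
  · rintro ⟨c, rfl⟩
    exact ⟨⟨c, _, fun x hx => map_le_of_mem_zonotope c hx, signFace_eq_maximizers p v c⟩,
      _, signFace_center_mem p v _⟩

theorem eq_of_signFace_subset (p : E) (v : ι → E) (c : E →ₗ[ℝ] ℝ) {s : ι → SignType}
    (h : signFace p v s ⊆ signFace p v (fun j => SignType.sign (c (v j)))) (j : ι)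
    (hj : SignType.sign (c (v j)) ≠ 0) : s j = SignType.sign (c (v j)) := by
  have hmem := h (signFace_center_mem p v s)
  rw [signFace_eq_maximizers] at hmem
  have := (sum_eq_sum_abs_iff (a := fun j => c (v j))
    fun j => abs_coe_signType_le_one (s j)).1 (by simpa using hmem.2) j hj
  revert this
  generalize SignType.sign (c (v j)) = b
  generalize s j = a
  cases a <;> cases b <;> norm_num

theorem signFace_injOn (p : E) (v : ι → E) :
    Set.InjOn (signFace p v) {s | ∃ c : E →ₗ[ℝ] ℝ, s = fun j => SignType.sign (c (v j))} := by
  rintro _ ⟨c, rfl⟩ _ ⟨c', rfl⟩ h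
  funext j
  by_cases hj : SignType.sign (c (v j)) = 0
  · by_cases hj' : SignType.sign (c' (v j)) = 0
    · rw [hj, hj']
    · exact eq_of_signFace_subset p v c' h.subset j hj'
  · exact (eq_of_signFace_subset p v c h.symm.subset j hj).symm

theorem vectorSpan_signFace (p : E) (v : ι → E) (s : ι → SignType) :
    vectorSpan ℝ (signFace p v s) = Submodule.span ℝ (v '' {j | s j = 0}) := by
  classical
  apply le_antisymm
  · rw [vectorSpan_def, Submodule.span_le]
    rintro _ ⟨_, ⟨x, -, hxs, rfl⟩, _, ⟨y, -, hys, rfl⟩, rfl⟩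
    have : p + ∑ j, x j • v j -ᵥ (p + ∑ j, y j • v j) = ∑ j, (x j - y j) • v j := by
      simp [sub_smul]
    simp only [this]
    refine Submodule.sum_mem _ fun j _ => ?_
    by_cases hj : s j = 0
    · exact Submodule.smul_mem _ _ (Submodule.subset_span ⟨j, hj, rfl⟩)
    · simp [hxs j hj, hys j hj]
  · rw [Submodule.span_le]
    rintro _ ⟨j, hj, rfl⟩
    have hj : s j = 0 := hj
    have hmem : p + ∑ k, (Function.update (fun k => (s k : ℝ)) j 1) k • v k ∈
        signFace p v s := by
      refine ⟨_, fun k => ?_, fun k hk => ?_, rfl⟩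
      · by_cases hkj : k = j
        · subst hkj; simp
        · simpa [hkj] using abs_coe_signType_le_one (s k)
      · have hkj : k ≠ j := by rintro rfl; exact hk hj
        simp [hkj]
    have := vsub_mem_vectorSpan ℝ hmem (signFace_center_mem p v s)
    convert this using 1
    rw [vsub_eq_sub, add_sub_add_left_eq_sub, ← Finset.sum_sub_distrib,
      Finset.sum_eq_single j]
    · simp [hj]
    · intro k _ hkj
      simp [hkj]
    · simp

/-- Proper nonempty faces of a zonotope correspond to the nonzero covectors of its generators. -/
theorem nF_zonotope (p : E) (v : ι → E) (i : ℕ) :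
    nF (zonotope p v) i =
      Set.ncard {s : ι → SignType | (∃ c : E →ₗ[ℝ] ℝ, s = fun j => SignType.sign (c (v j))) ∧
        s ≠ 0 ∧ finrank ℝ (Submodule.span ℝ (v '' {j | s j = 0})) = i} := by
  rw [← ((signFace_injOn p v).mono fun s hs => hs.1).ncard_image, nF]
  congr 1
  ext F
  have hzero : (0 : ι → SignType) ∈
      {s | ∃ c : E →ₗ[ℝ] ℝ, s = fun j => SignType.sign (c (v j))} := ⟨0, by ext; simp⟩
  constructor
  · rintro ⟨hF, hne, hF', hd⟩
    obtain ⟨c, rfl⟩ := (isFace_zonotope_iff p v F).1 ⟨hF, hF'⟩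
    refine ⟨_, ⟨⟨c, rfl⟩, fun h => hne ?_, ?_⟩, rfl⟩
    · rw [h, signFace_zero]
    · rwa [← vectorSpan_signFace p]
  · rintro ⟨s, ⟨hc, hs, hd⟩, rfl⟩
    have := (isFace_zonotope_iff p v (signFace p v s)).2 (hc.imp fun c h => by rw [← h])
    refine ⟨this.1, fun h => hs ?_, this.2, ?_⟩
    · exact signFace_injOn p v hc hzero (h.trans (signFace_zero p v).symm)
    · rwa [vectorSpan_signFace]

end Zonotope

/-- A sign vector having both a positive and a negative entry. -/
def IsMixed {d : ℕ} (s : Fin d → SignType) : Prop := (∃ j, s j = 1) ∧ ∃ j, s j = -1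

instance {d : ℕ} (s : Fin d → SignType) : Decidable (IsMixed s) :=
  inferInstanceAs (Decidable (_ ∧ _))

/-- The number of zero entries of a sign vector. -/
def zeroCount {d : ℕ} (s : Fin d → SignType) : ℕ := ∑ j, if s j = 0 then 1 else 0

theorem finrank_span_image_eq_zeroCount {d : ℕ} {E : Type*} [AddCommGroup E] [Module ℝ E]
    {v : Fin d → E} {s : Fin d → SignType} (h : LinearIndepOn ℝ v {j | s j = 0}) :
    finrank ℝ (Submodule.span ℝ (v '' {j | s j = 0})) = zeroCount s := by
  rw [Set.image_eq_range, finrank_span_eq_card (b := fun j : {j | s j = 0} => v j) h,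
    zeroCount, Finset.sum_boole, Fintype.card_ofFinset]
  simp

theorem cube_eq_zonotope (d : ℕ) :
    cube d = zonotope 0 (fun j : Fin d => (Pi.single j 1 : Fin d → ℝ)) := by
  have h (x : Fin d → ℝ) : ∑ j, x j • (Pi.single j 1 : Fin d → ℝ) = x := by
    simpa using (pi_eq_sum_univ' x).symm
  ext y
  simp [cube, zonotope, h]

theorem nF_cube (d i : ℕ) :
    nF (cube d) i = Finset.card {s : Fin d → SignType | s ≠ 0 ∧ zeroCount s = i} := by
  rw [cube_eq_zonotope, nF_zonotope, ← Set.ncard_coe_finset]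
  congr 1
  ext s
  have hli : LinearIndependent ℝ (fun j : Fin d => (Pi.single j 1 : Fin d → ℝ)) :=
    Pi.linearIndependent_single_one (Fin d) ℝ
  rw [Set.mem_ofPred_eq, finrank_span_image_eq_zeroCount (hli.linearIndepOn _)]
  have hc : ∃ c : (Fin d → ℝ) →ₗ[ℝ] ℝ, s = fun j => SignType.sign (c (Pi.single j 1)) := by
    refine ⟨∑ j, (s j : ℝ) • LinearMap.proj j, funext fun j => ?_⟩
    rcases SignType.trichotomy (s j) with h | h | h <;> simp [Pi.single_apply, h]
  simp [hc]

/-- Generators of the centrally symmetric translate of `zon d`. -/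
noncomputable def zonGen (d : ℕ) : Fin (d + 1) → (Fin d → ℝ) :=
  Fin.cons (fun _ => -(1 / 2)) (fun j => Pi.single j 1)

theorem sum_smul_zonGen {d : ℕ} (x : Fin (d + 1) → ℝ) :
    ∑ j, x j • zonGen d j = fun k => x k.succ - x 0 / 2 := by
  ext k
  simp [Fin.sum_univ_succ, zonGen, Pi.single_apply]
  ring

theorem zon_eq_zonotope (d : ℕ) : zon d = zonotope (fun _ => 1 / 2) (zonGen d) := by
  ext y
  simp only [zon, zonotope, sum_smul_zonGen]
  constructor
  · rintro ⟨x, hx, t, h0, h1, rfl⟩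
    refine ⟨Fin.cons (1 - 2 * t) x, fun j => ?_, ?_⟩
    · cases j using Fin.cases with
      | zero =>
        rw [Fin.cons_zero, abs_le]
        constructor <;> linarith
      | succ k => exact hx k
    · ext k
      simp
      ring
  · rintro ⟨x, hx, rfl⟩
    have h0 := abs_le.1 (hx 0)
    refine ⟨fun k => x k.succ, fun k => hx _, (1 - x 0) / 2, by linarith, by linarith, ?_⟩
    ext k
    simp
    ring

theorem linearIndepOn_zonGen {d : ℕ} {S : Set (Fin (d + 1))} {j₀ : Fin (d + 1)} (hS : j₀ ∉ S) :
    LinearIndepOn ℝ (zonGen d) S := by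
  classical
  rw [linearIndepOn_iff]
  intro g hg h
  rw [Finsupp.linearCombination_apply, Finsupp.sum_fintype _ _ (by simp),
    sum_smul_zonGen] at h
  have hk (k : Fin d) : g k.succ = g 0 / 2 := by
    have := congrFun h k
    simp at this
    linarith
  have hj : g j₀ = 0 := by
    by_contra hne
    exact hS (hg (by simpa using hne))
  have h0 : g 0 = 0 := by
    cases j₀ using Fin.cases with
    | zero => exact hj
    | succ k => have := hk k; linarith
  ext j
  cases j using Fin.cases with
  | zero => exact h0
  | succ k => simp [hk, h0]

theorem IsMixed.exists_sum_eq_zero {d : ℕ} {s : Fin d → SignType} (h : IsMixed s) :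
    ∃ a : Fin d → ℝ, (∀ j, SignType.sign (a j) = s j) ∧ ∑ j, a j = 0 := by
  obtain ⟨⟨jp, hp⟩, jn, hn⟩ := h
  have hP : 0 < Finset.card {j | s j = 1} := Finset.card_pos.2 ⟨jp, by simpa using hp⟩
  have hN : 0 < Finset.card {j | s j = -1} := Finset.card_pos.2 ⟨jn, by simpa using hn⟩
  set P := Finset.card {j | s j = 1} with hPdef
  set N := Finset.card {j | s j = -1} with hNdef
  have hP' : (0 : ℝ) < P := by exact_mod_cast hP
  have hN' : (0 : ℝ) < N := by exact_mod_cast hN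
  refine ⟨fun j => (if s j = 1 then (N : ℝ) else 0) - (if s j = -1 then (P : ℝ) else 0),
    fun j => ?_, ?_⟩
  · rcases SignType.trichotomy (s j) with h | h | h <;> simp [h, hP', hN']
  · rw [Finset.sum_sub_distrib, ← Finset.sum_filter, ← Finset.sum_filter]
    simp only [Finset.sum_const, nsmul_eq_mul, ← hPdef, ← hNdef]
    ring

theorem isMixed_sign_of_sum_eq_zero {d : ℕ} {a : Fin d → ℝ} (h : ∑ j, a j = 0)
    (h0 : (fun j => SignType.sign (a j)) ≠ 0) : IsMixed fun j => SignType.sign (a j) := by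
  have hne : ∃ j, a j ≠ 0 := by
    by_contra! hall
    exact h0 (funext fun j => by simp [hall j])
  obtain ⟨j, hj⟩ := hne
  obtain ⟨k, -, hk⟩ := Finset.exists_pos_of_sum_zero_of_exists_nonzero a h
    ⟨j, Finset.mem_univ _, hj⟩
  obtain ⟨l, -, hl⟩ := Finset.exists_pos_of_sum_zero_of_exists_nonzero (fun j => -a j)
    (by simp [h]) ⟨j, Finset.mem_univ _, by simpa using hj⟩
  exact ⟨⟨k, sign_pos hk⟩, l, sign_neg (by linarith)⟩

theorem IsMixed.ne_zero {d : ℕ} {s : Fin d → SignType} (h : IsMixed s) : s ≠ 0 := by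
  rintro rfl
  obtain ⟨⟨j, hj⟩, -⟩ := h
  simp at hj

theorem exists_sign_zonGen_and_ne_zero_iff {d : ℕ} (s : Fin (d + 1) → SignType) :
    ((∃ c : (Fin d → ℝ) →ₗ[ℝ] ℝ, s = fun j => SignType.sign (c (zonGen d j))) ∧ s ≠ 0) ↔
      IsMixed s := by
  have two : SignType.sign (2 : ℝ) = 1 := sign_pos (by norm_num)
  constructor
  · rintro ⟨⟨c, rfl⟩, h0⟩
    have hs : (fun j => SignType.sign (c (zonGen d j))) = fun j => SignType.sign
        ((Fin.cons (2 : ℝ) (fun _ => 1) : Fin (d + 1) → ℝ) j * c (zonGen d j)) := by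
      ext j
      cases j using Fin.cases <;> simp [sign_mul, two]
    rw [hs] at h0 ⊢
    refine isMixed_sign_of_sum_eq_zero ?_ h0
    have h := congrArg c
      (sum_smul_zonGen (Fin.cons (2 : ℝ) (fun _ => 1) : Fin (d + 1) → ℝ))
    simp only [map_sum, map_smul, smul_eq_mul] at h
    rw [h, ← map_zero c]
    congr 1
    ext k
    simp
  · intro h
    refine ⟨?_, h.ne_zero⟩
    obtain ⟨a, ha, hsum⟩ := h.exists_sum_eq_zero
    refine ⟨∑ k : Fin d, a k.succ • LinearMap.proj k, funext fun j => ?_⟩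
    rw [← ha]
    cases j using Fin.cases with
    | zero =>
      rw [Fin.sum_univ_succ] at hsum
      have : (∑ k : Fin d, a k.succ • LinearMap.proj (R := ℝ) (φ := fun _ => ℝ) k)
          (zonGen d 0) = (1 / 2) * a 0 := by
        simp [zonGen, ← Finset.sum_mul]
        linarith
      rw [this, sign_mul, sign_pos (a := (1 / 2 : ℝ)) (by norm_num), one_mul]
    | succ k => simp [zonGen, Pi.single_apply]

theorem nF_zon (d i : ℕ) :
    nF (zon d) i =
      Finset.card {s : Fin (d + 1) → SignType | IsMixed s ∧ zeroCount s = i} := by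
  rw [zon_eq_zonotope, nF_zonotope, ← Set.ncard_coe_finset]
  congr 1
  ext s
  rw [Set.mem_ofPred_eq, ← and_assoc, exists_sign_zonGen_and_ne_zero_iff]
  simp only [Finset.coe_filter, Finset.mem_univ, true_and, Set.mem_ofPred_eq]
  refine and_congr_right fun h => ?_
  obtain ⟨j, hj⟩ := h.1
  rw [finrank_span_image_eq_zeroCount (linearIndepOn_zonGen (j₀ := j) (by simp [hj]))]

theorem isMixed_cons {d : ℕ} (a : SignType) (s : Fin d → SignType) :
    IsMixed (Fin.cons a s : Fin (d + 1) → SignType) ↔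
      (a = 1 ∨ ∃ j, s j = 1) ∧ (a = -1 ∨ ∃ j, s j = -1) := by
  simp [IsMixed, Fin.exists_fin_succ]

theorem zeroCount_cons {d : ℕ} (a : SignType) (s : Fin d → SignType) :
    zeroCount (Fin.cons a s : Fin (d + 1) → SignType) =
      (if a = 0 then 1 else 0) + zeroCount s := by
  simp only [zeroCount, Fin.sum_univ_succ, Fin.cons_zero, Fin.cons_succ]

theorem ne_zero_iff_exists_one_or_neg_one {d : ℕ} (s : Fin d → SignType) :
    s ≠ 0 ↔ (∃ j, s j = 1) ∨ ∃ j, s j = -1 := by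
  rw [← exists_or, Function.ne_iff]
  refine exists_congr fun j => ?_
  rcases SignType.trichotomy (s j) with h | h | h <;> simp [h]

theorem card_isMixed_succ (d i : ℕ) :
    Finset.card {s : Fin (d + 1) → SignType | IsMixed s ∧ zeroCount s = i} =
      Finset.card {s : Fin d → SignType | s ≠ 0 ∧ zeroCount s = i} +
      Finset.card {s : Fin d → SignType | IsMixed s ∧ zeroCount s = i} +
      Finset.card {s : Fin d → SignType | IsMixed s ∧ zeroCount s + 1 = i} := by
  simp only [Finset.card_filter]
  rw [← (Fin.consEquiv fun _ : Fin (d + 1) => SignType).sum_comp, Fintype.sum_prod_type_right,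
    ← Finset.sum_add_distrib, ← Finset.sum_add_distrib]
  refine Finset.sum_congr rfl fun s _ => ?_
  have hsum (f : SignType → ℕ) : ∑ a, f a = f 0 + f (-1) + f 1 := by
    rw [show (Finset.univ : Finset SignType) = {0, -1, 1} from rfl]
    simp [add_assoc]
  have hcons (a : SignType) : (Fin.consEquiv fun _ : Fin (d + 1) => SignType) (a, s) =
      Fin.cons a s := rfl
  simp only [hsum, hcons, isMixed_cons, zeroCount_cons, ne_zero_iff_exists_one_or_neg_one]
  by_cases h1 : ∃ j, s j = 1 <;> by_cases h2 : ∃ j, s j = -1 <;>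
    simp [IsMixed, h1, h2, add_comm]
  ring

/-- The $f$-vector of the basis polytope $Q_n = [-1,1]^{n-1} + [0,(1,\dots,1)]$ of
the $n$-cube satisfies $f_{Q_n,0} = f_{\square_{n-1},0} + f_{Q_{n-1},0}$ and
$f_{Q_n,i} = f_{\square_{n-1},i} + f_{Q_{n-1},i} + f_{Q_{n-1},i-1}$ for
$1 \le i \le n-2$, where $Q_{n-1} = [-1,1]^{n-2} + [0,(1,\dots,1)]$. -/
theorem fvector_cube_basis_polytope (n : ℕ) (hn : 2 ≤ n) :
    nF (zon (n - 1)) 0 = nF (cube (n - 1)) 0 + nF (zon (n - 2)) 0 ∧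
    ∀ i : ℕ, 1 ≤ i → i ≤ n - 2 →
      nF (zon (n - 1)) i = nF (cube (n - 1)) i + nF (zon (n - 2)) i +
        nF (zon (n - 2)) (i - 1) := by
  obtain ⟨d, rfl⟩ : ∃ d, n = d + 2 := ⟨n - 2, by omega⟩
  change nF (zon (d + 1)) 0 = nF (cube (d + 1)) 0 + nF (zon d) 0 ∧
    ∀ i : ℕ, 1 ≤ i → i ≤ d →
      nF (zon (d + 1)) i = nF (cube (d + 1)) i + nF (zon d) i + nF (zon d) (i - 1)
  simp only [nF_zon, nF_cube]
  refine ⟨?_, fun i hi _ => ?_⟩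
  · simp [card_isMixed_succ (d + 1)]
  · obtain ⟨k, rfl⟩ : ∃ k, i = k + 1 := ⟨i - 1, by omega⟩
    simp [card_isMixed_succ (d + 1)]
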